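/- arXiv:2101.05835 — 2 statements merged into one kernel-verified Lean document; each statement's English description precedes it below -/
import Mathlib

section
/- Let 0 < R' < R and 0 < κ_p < κ_s. For n ∈ ℕ define z_n^{(1)}(t) = t·(h^{(1)}_n)'(t)/h^{(1)}_n(t), z_n^p = h^{(1)}_n(κ_p R)/h^{(1)}_n(κ_p R'), z_n^s = h^{(1)}_n(κ_s R)/h^{(1)}_n(κ_s R'), Λ_n(R') = z_n^{(1)}(κ_p R')·(1 + z_n^{(1)}(κ_s R')) − n(n+1), and the complex numbers Q_{n,11} = (R'/(R·Λ_n(R')))·[−n(n+1)·z_n^p + z_n^{(1)}(κ_p R')·(1 + z_n^{(1)}(κ_s R))·z_n^s], Q_{n,13} = (R'/(R·Λ_n(R')))·√(n(n+1))·[(1 + z_n^{(1)}(κ_s R'))·z_n^p − (1 + z_n^{(1)}(κ_s R))·z_n^s], Q_{n,31} = (R'/(R·Λ_n(R')))·√(n(n+1))·[−z_n^{(1)}(κ_p R)·z_n^p + z_n^{(1)}(κ_p R')·z_n^s], Q_{n,33} = (R'/(R·Λ_n(R')))·[(1 + z_n^{(1)}(κ_s R'))·z_n^{(1)}(κ_p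 R)·z_n^p − n(n+1)·z_n^s], and Q_{n,22} = z_n^s. Then there exist a constant C > 0 and an integer N such that for all n ≥ N and all (i, j) ∈ {(1,1), (1,3), (3,1), (3,3), (2,2)}, |Q_{n,ij}| ≤ C·n·(R'/R)^n. -/
/-- Spherical Bessel function of the first kind `j_n`, defined by the standard
recurrence `j_{n+1}(z) = ((2n+1)/z) j_n(z) - j_{n-1}(z)`. -/
noncomputable def jsph : ℕ → ℝ → ℝ
  | 0, z => Real.sin z / z
  | 1, z => Real.sin z / z ^ 2 - Real.cos z / z
  | (n + 2), z => ((2 * (n : ℝ) + 3) / z) * jsph (n + 1) z - jsph n z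

/-- Spherical Bessel function of the second kind `y_n`, defined by the standard
recurrence `y_{n+1}(z) = ((2n+1)/z) y_n(z) - y_{n-1}(z)`. -/
noncomputable def ysph : ℕ → ℝ → ℝ
  | 0, z => -Real.cos z / z
  | 1, z => -Real.cos z / z ^ 2 - Real.sin z / z
  | (n + 2), z => ((2 * (n : ℝ) + 3) / z) * ysph (n + 1) z - ysph n z

/-- Spherical Hankel function of the first kind `h^{(1)}_n`. -/
noncomputable def h1sph (n : ℕ) (z : ℝ) : ℂ :=
  (jsph n z : ℂ) + Complex.I * (ysph n z : ℂ)

/-- Spherical Hankel function of the second kind `h^{(2)}_n`. -/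
noncomputable def h2sph (n : ℕ) (z : ℝ) : ℂ :=
  (jsph n z : ℂ) - Complex.I * (ysph n z : ℂ)

/-- `z_n^{(1)}(t) = t (h^{(1)}_n)'(t) / h^{(1)}_n(t)`. -/
noncomputable def zn1 (n : ℕ) (t : ℝ) : ℂ := (t : ℂ) * deriv (h1sph n) t / h1sph n t

/-- `z_n^p = h^{(1)}_n(κ_p R)/h^{(1)}_n(κ_p R')`. -/
noncomputable def znp (R' R κp : ℝ) (n : ℕ) : ℂ := h1sph n (κp * R) / h1sph n (κp * R')

/-- `z_n^s = h^{(1)}_n(κ_s R)/h^{(1)}_n(κ_s R')`. -/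
noncomputable def zns (R' R κs : ℝ) (n : ℕ) : ℂ := h1sph n (κs * R) / h1sph n (κs * R')

/-- `Λ_n(R') = z_n^{(1)}(κ_p R')(1 + z_n^{(1)}(κ_s R')) - n(n+1)`. -/
noncomputable def LambdaN (R' κp κs : ℝ) (n : ℕ) : ℂ :=
  zn1 n (κp * R') * (1 + zn1 n (κs * R')) - (n : ℂ) * ((n : ℂ) + 1)

noncomputable def Qn11 (R' R κp κs : ℝ) (n : ℕ) : ℂ :=
  ((R' : ℂ) / ((R : ℂ) * LambdaN R' κp κs n)) *
    (-((n : ℂ) * ((n : ℂ) + 1)) * znp R' R κp n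
      + zn1 n (κp * R') * (1 + zn1 n (κs * R)) * zns R' R κs n)

noncomputable def Qn13 (R' R κp κs : ℝ) (n : ℕ) : ℂ :=
  ((R' : ℂ) / ((R : ℂ) * LambdaN R' κp κs n)) * (Real.sqrt (n * (n + 1)) : ℂ) *
    ((1 + zn1 n (κs * R')) * znp R' R κp n - (1 + zn1 n (κs * R)) * zns R' R κs n)

noncomputable def Qn31 (R' R κp κs : ℝ) (n : ℕ) : ℂ :=
  ((R' : ℂ) / ((R : ℂ) * LambdaN R' κp κs n)) * (Real.sqrt (n * (n + 1)) : ℂ) *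
    (-(zn1 n (κp * R)) * znp R' R κp n + zn1 n (κp * R') * zns R' R κs n)

noncomputable def Qn33 (R' R κp κs : ℝ) (n : ℕ) : ℂ :=
  ((R' : ℂ) / ((R : ℂ) * LambdaN R' κp κs n)) *
    ((1 + zn1 n (κs * R')) * zn1 n (κp * R) * znp R' R κp n
      - ((n : ℂ) * ((n : ℂ) + 1)) * zns R' R κs n)

noncomputable def Qn22 (R' R κs : ℝ) (n : ℕ) : ℂ := zns R' R κs n

/-!
Put `G_n(t) = t^(n+1) h_n(t) / (2n-1)!!`. Since `G_n(0) = -i` and `G_n'(t) = t G_{n-1}(t) / (2n-1)`,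
the mean value inequality gives `G_n(t) = -i + O(1/n)`. With `q = R'/R` this means that `z_n^p` and
`z_n^s` are both `q^(n+1) + O(q^n/n)`, and that `z_n^{(1)}(t) = -(n+1) + t²/(2n) + o(1/n)`.
Therefore `z_n^{(1)}(a) (1 + z_n^{(1)}(b)) - n(n+1)` tends to `-(a² + b²)/2`, so that `Λ_n` stays
away from zero. Each bracket in the entries of `Q_n` has the form
`A x - B y = B (x - y) + (A - B) x`, where `A - B` is bounded and `x - y` is smaller than `x` by a
factor `1/n`; these two cancellations leave the power `n¹`.
-/

open Asymptotics Filter Topology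
open scoped Nat

lemma const_isBigO_natCast {E : Type*} [NormedAddCommGroup E] (c : E) :
    (fun _ : ℕ ↦ c) =O[atTop] fun n ↦ (n : ℝ) :=
  (isLittleO_const_left.2 (.inr (tendsto_norm_atTop_atTop.comp tendsto_natCast_atTop_atTop))).isBigO

lemma natCast_isBigO (l : Filter ℕ) : (fun n : ℕ ↦ (n : ℂ)) =O[l] fun n ↦ (n : ℝ) :=
  .of_norm_le fun n ↦ by simp

lemma natCast_add_one_isBigO : (fun n : ℕ ↦ (n : ℂ) + 1) =O[atTop] fun n ↦ (n : ℝ) :=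
  (natCast_isBigO atTop).add (const_isBigO_natCast 1)

lemma sqrt_natCast_mul_add_one_isBigO :
    (fun n : ℕ ↦ (√(n * (n + 1)) : ℂ)) =O[atTop] fun n ↦ (n : ℝ) := by
  refine .trans (.of_norm_le fun n ↦ ?_) natCast_add_one_isBigO.norm_left
  have hnorm : ‖(n : ℂ) + 1‖ = n + 1 := mod_cast Complex.norm_natCast (n + 1)
  rw [Complex.norm_of_nonneg (by positivity), hnorm, Real.sqrt_le_left (by positivity)]
  nlinarith [n.cast_nonneg (α := ℝ)]

lemma ofReal_pow_succ_isBigO (q : ℝ) (l : Filter ℕ) :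
    (fun n ↦ (q : ℂ) ^ (n + 1)) =O[l] fun n ↦ q ^ n :=
  .of_bound ‖q‖ (.of_forall fun n ↦ by simp [pow_succ'])

lemma isBigO_mul_sub_mul {α S : Type*} [SeminormedRing S] {l : Filter α} {A B x y : α → S}
    {g m w : α → ℝ} (hB : B =O[l] fun i ↦ g i * m i) (hAB : (fun i ↦ A i - B i) =O[l] g)
    (hx : x =O[l] w) (hxy : (fun i ↦ x i - y i) =O[l] fun i ↦ w i / m i) :
    (fun i ↦ A i * x i - B i * y i) =O[l] fun i ↦ g i * w i := by
  have hcancel : (fun i ↦ g i * m i * (w i / m i)) =O[l] fun i ↦ g i * w i := by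
    refine .of_bound' (.of_forall fun i ↦ ?_)
    rcases eq_or_ne (m i) 0 with hm | hm
    · simpa [hm] using mul_nonneg (abs_nonneg (g i)) (abs_nonneg (w i))
    · rw [mul_assoc, mul_div_cancel₀ _ hm]
  exact (((hB.mul hxy).trans hcancel).add (hAB.mul hx)).congr_left fun i ↦ by
    noncomm_ring

/-- The normalised spherical Hankel function `t ^ (n + 1) * h1sph n t / (2 * n - 1)‼`. The
recurrence of `h1sph`, rewritten for this function, has no singularity at `t = 0` and serves as its
definition. -/
noncomputable def normalizedHankel : ℕ → ℝ → ℂ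
  | 0, t => -Complex.I * Complex.exp (t * Complex.I)
  | 1, t => -Complex.I * Complex.exp (t * Complex.I) * (1 - t * Complex.I)
  | n + 2, t => normalizedHankel (n + 1) t
      - (t ^ 2 / ((2 * n + 3) * (2 * n + 1)) : ℝ) * normalizedHankel n t

lemma normalizedHankel_apply_zero (n : ℕ) : normalizedHankel n 0 = -Complex.I := by
  induction n using Nat.twoStepInduction with
  | zero | one => simp [normalizedHankel]
  | more n _ ih => simp [normalizedHankel, ih]

lemma hasDerivAt_ofReal_mul_I (t : ℝ) :
    HasDerivAt (fun s : ℝ ↦ (s : ℂ) * Complex.I) Complex.I t := by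
  simpa using (hasDerivAt_id t).ofReal_comp.mul_const Complex.I

lemma hasDerivAt_normalizedHankel_zero (t : ℝ) :
    HasDerivAt (normalizedHankel 0) (Complex.I * normalizedHankel 0 t) t := by
  refine ((hasDerivAt_ofReal_mul_I t).cexp.const_mul (-Complex.I)).congr_deriv ?_
  simp only [normalizedHankel]
  ring

lemma hasDerivAt_normalizedHankel_add_two {n : ℕ} {t : ℝ} {d₀ d₁ : ℂ}
    (h₀ : HasDerivAt (normalizedHankel n) d₀ t) (h₁ : HasDerivAt (normalizedHankel (n + 1)) d₁ t) :
    HasDerivAt (normalizedHankel (n + 2))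
      (d₁ - ((2 * t / ((2 * n + 3) * (2 * n + 1)) : ℝ) * normalizedHankel n t
        + (t ^ 2 / ((2 * n + 3) * (2 * n + 1)) : ℝ) * d₀)) t := by
  have hsq : HasDerivAt (fun s : ℝ ↦ s ^ 2 / ((2 * (n : ℝ) + 3) * (2 * n + 1)))
      (2 * t / ((2 * n + 3) * (2 * n + 1))) t := by
    simpa using (hasDerivAt_pow 2 t).div_const ((2 * (n : ℝ) + 3) * (2 * n + 1))
  exact h₁.sub (hsq.ofReal_comp.mul h₀)

lemma hasDerivAt_normalizedHankel_succ (n : ℕ) (t : ℝ) :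
    HasDerivAt (normalizedHankel (n + 1)) ((t / (2 * n + 1) : ℝ) * normalizedHankel n t) t := by
  have h1 : HasDerivAt (normalizedHankel 1) (t * normalizedHankel 0 t) t := by
    refine ((hasDerivAt_normalizedHankel_zero t).mul
      ((hasDerivAt_ofReal_mul_I t).const_sub 1)).congr_deriv ?_
    linear_combination (-t * normalizedHankel 0 t) * Complex.I_sq
  induction n using Nat.twoStepInduction with
  | zero => exact h1.congr_deriv (by simp)
  | one =>
    refine (hasDerivAt_normalizedHankel_add_two
      (hasDerivAt_normalizedHankel_zero t) h1).congr_deriv ?_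
    simp only [normalizedHankel]
    push_cast
    ring
  | more n ih₀ ih₁ =>
    refine (hasDerivAt_normalizedHankel_add_two ih₀ ih₁).congr_deriv ?_
    have hn1 : 2 * (n : ℂ) + 1 ≠ 0 := by norm_cast
    have hn3 : 2 * (n : ℂ) + 3 ≠ 0 := by norm_cast
    have hn5 : 2 * ((n : ℂ) + 2) + 1 ≠ 0 := by norm_cast
    have hn5' : 2 * ((n : ℂ) + 1) + 3 ≠ 0 := by norm_cast
    have hn3' : 2 * ((n : ℂ) + 1) + 1 ≠ 0 := by norm_cast
    simp only [normalizedHankel]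
    push_cast
    field_simp
    ring

lemma norm_normalizedHankel_le (n : ℕ) {t : ℝ} (ht : 0 ≤ t) :
    ‖normalizedHankel n t‖ ≤ Real.exp (t ^ 2 / 2) := by
  induction n generalizing t with
  | zero =>
    simpa [normalizedHankel, Complex.norm_exp_ofReal_mul_I] using by positivity
  | succ n ih =>
    have hexp (x : ℝ) :
        HasDerivAt (fun x : ℝ ↦ Real.exp (x ^ 2 / 2)) (x * Real.exp (x ^ 2 / 2)) x :=
      ((hasDerivAt_pow 2 x).div_const 2).exp.congr_deriv (by simp; ring)
    refine image_norm_le_of_norm_deriv_right_le_deriv_boundary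
      (fun x _ ↦ (hasDerivAt_normalizedHankel_succ n x).continuousAt.continuousWithinAt)
      (fun x _ ↦ (hasDerivAt_normalizedHankel_succ n x).hasDerivWithinAt)
      (by simp [normalizedHankel_apply_zero]) hexp (fun x hx ↦ ?_) ⟨ht, le_rfl⟩
    have hx0 : 0 ≤ x := hx.1
    rw [norm_mul, Complex.norm_of_nonneg (by positivity)]
    gcongr
    · exact div_le_self hx0 (by linarith [n.cast_nonneg (α := ℝ)])
    · exact ih hx0

lemma norm_normalizedHankel_succ_add_I_le (n : ℕ) {t : ℝ} (ht : 0 ≤ t) :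
    ‖normalizedHankel (n + 1) t + Complex.I‖ ≤ t ^ 2 * Real.exp (t ^ 2 / 2) / (2 * n + 1) := by
  have hderiv (x : ℝ) (hx : x ∈ Set.Ico 0 t) :
      ‖((x / (2 * n + 1) : ℝ) : ℂ) * normalizedHankel n x‖
        ≤ t / (2 * n + 1) * Real.exp (t ^ 2 / 2) := by
    have hx0 : 0 ≤ x := hx.1
    have hxt : x ≤ t := hx.2.le
    rw [norm_mul, Complex.norm_of_nonneg (by positivity)]
    calc x / (2 * n + 1) * ‖normalizedHankel n x‖
        ≤ x / (2 * n + 1) * Real.exp (x ^ 2 / 2) := by gcongr; exact norm_normalizedHankel_le n hx0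
      _ ≤ t / (2 * n + 1) * Real.exp (t ^ 2 / 2) := by gcongr
  have hmv := norm_image_sub_le_of_norm_deriv_le_segment'
    (fun x _ ↦ (hasDerivAt_normalizedHankel_succ n x).hasDerivWithinAt) hderiv t ⟨ht, le_rfl⟩
  rw [normalizedHankel_apply_zero, sub_neg_eq_add, sub_zero] at hmv
  exact hmv.trans_eq (by ring)

lemma normalizedHankel_add_I_isBigO {t : ℝ} (ht : 0 ≤ t) :
    (fun n ↦ normalizedHankel n t + Complex.I) =O[atTop] fun n : ℕ ↦ (n : ℝ)⁻¹ := by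
  refine .of_bound (t ^ 2 * Real.exp (t ^ 2 / 2)) ?_
  filter_upwards [eventually_ge_atTop 1] with n hn
  obtain ⟨m, rfl⟩ := Nat.exists_eq_add_of_le' hn
  rw [Real.norm_of_nonneg (by positivity), ← div_eq_mul_inv]
  refine (norm_normalizedHankel_succ_add_I_le m ht).trans ?_
  gcongr
  push_cast
  linarith [m.cast_nonneg (α := ℝ)]

lemma tendsto_normalizedHankel {t : ℝ} (ht : 0 ≤ t) :
    Tendsto (normalizedHankel · t) atTop (𝓝 (-Complex.I)) := by
  simpa using ((normalizedHankel_add_I_isBigO ht).trans_tendsto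
    tendsto_inv_atTop_nhds_zero_nat).sub_const Complex.I

lemma eventually_normalizedHankel_ne_zero {t : ℝ} (ht : 0 ≤ t) :
    ∀ᶠ n in atTop, normalizedHankel n t ≠ 0 :=
  (tendsto_normalizedHankel ht).eventually_ne (neg_ne_zero.2 Complex.I_ne_zero)

lemma normalizedHankel_div_sub_one_isBigO {a b : ℝ} (ha : 0 ≤ a) (hb : 0 ≤ b) :
    (fun n ↦ normalizedHankel n a / normalizedHankel n b - 1)
      =O[atTop] fun n : ℕ ↦ (n : ℝ)⁻¹ := by
  have hdiff := (normalizedHankel_add_I_isBigO ha).sub (normalizedHankel_add_I_isBigO hb)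
  have hinv := ((tendsto_normalizedHankel hb).inv₀ (neg_ne_zero.2 Complex.I_ne_zero)).isBigO_one ℝ
  refine (hdiff.mul hinv).congr' ?_ (by simp)
  filter_upwards [eventually_normalizedHankel_ne_zero hb] with n hn
  field_simp
  ring

lemma h1sph_add_two (n : ℕ) (t : ℝ) :
    h1sph (n + 2) t = (2 * n + 3) / t * h1sph (n + 1) t - h1sph n t := by
  simp only [h1sph, jsph, ysph]
  push_cast
  ring

lemma h1sph_zero (t : ℝ) : h1sph 0 t = -Complex.I * Complex.exp (t * Complex.I) / t := by
  simp only [h1sph, jsph, ysph, Complex.exp_mul_I]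
  push_cast
  linear_combination Complex.sin t / t * Complex.I_sq

lemma h1sph_one {t : ℝ} (ht : t ≠ 0) :
    h1sph 1 t = -Complex.I * Complex.exp (t * Complex.I) * (1 - t * Complex.I) / t ^ 2 := by
  have ht' : (t : ℂ) ≠ 0 := mod_cast ht
  simp only [h1sph, jsph, ysph, Complex.exp_mul_I]
  push_cast
  field_simp
  linear_combination (Complex.sin t - t * Complex.cos t - t * Complex.sin t * Complex.I) *
    Complex.I_sq

lemma doubleFactorial_two_mul_succ_sub_one (n : ℕ) :
    (2 * (n + 1) - 1)‼ = (2 * n + 1) * (2 * n - 1)‼ :=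
  Nat.doubleFactorial_add_one (2 * n)

lemma h1sph_eq_normalizedHankel (n : ℕ) {t : ℝ} (ht : t ≠ 0) :
    h1sph n t = (2 * n - 1)‼ / t ^ (n + 1) * normalizedHankel n t := by
  have ht' : (t : ℂ) ≠ 0 := mod_cast ht
  induction n using Nat.twoStepInduction with
  | zero => simp [h1sph_zero, normalizedHankel, div_eq_inv_mul]
  | one => simp [h1sph_one ht, normalizedHankel, div_eq_inv_mul]
  | more n ih₀ ih₁ =>
    have hn1 : 2 * (n : ℂ) + 1 ≠ 0 := by norm_cast
    have hn3 : 2 * (n : ℂ) + 3 ≠ 0 := by norm_cast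
    rw [h1sph_add_two, ih₀, ih₁, doubleFactorial_two_mul_succ_sub_one (n + 1),
      doubleFactorial_two_mul_succ_sub_one n]
    simp only [normalizedHankel]
    push_cast
    field_simp
    ring

lemma h1sph_div_h1sph {a b : ℝ} (ha : a ≠ 0) (hb : b ≠ 0) (n : ℕ) :
    h1sph n a / h1sph n b =
      ((b / a : ℝ) : ℂ) ^ (n + 1) * (normalizedHankel n a / normalizedHankel n b) := by
  have hfac : ((2 * n - 1)‼ : ℂ) ≠ 0 := mod_cast (Nat.doubleFactorial_pos _).ne'
  rw [h1sph_eq_normalizedHankel n ha, h1sph_eq_normalizedHankel n hb, mul_div_mul_comm,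
    div_div_div_cancel_left' _ _ hfac]
  push_cast
  rw [div_pow]

lemma h1sph_div_h1sph_sub_pow_isBigO {a b : ℝ} (ha : 0 < a) (hb : 0 < b) :
    (fun n ↦ h1sph n a / h1sph n b - ((b / a : ℝ) : ℂ) ^ (n + 1))
      =O[atTop] fun n : ℕ ↦ (b / a) ^ n / n :=
  ((ofReal_pow_succ_isBigO (b / a) atTop).mul
    (normalizedHankel_div_sub_one_isBigO ha.le hb.le)).congr_left fun n ↦ by
      rw [h1sph_div_h1sph ha.ne' hb.ne']
      ring

lemma h1sph_div_h1sph_isBigO {a b : ℝ} (ha : 0 < a) (hb : 0 < b) :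
    (fun n ↦ h1sph n a / h1sph n b) =O[atTop] fun n : ℕ ↦ (b / a) ^ n := by
  have hone := ((tendsto_normalizedHankel ha.le).div (tendsto_normalizedHankel hb.le)
    (neg_ne_zero.2 Complex.I_ne_zero)).isBigO_one ℝ
  exact ((ofReal_pow_succ_isBigO (b / a) atTop).mul hone).congr
    (fun n ↦ (h1sph_div_h1sph ha.ne' hb.ne' n).symm) (fun n ↦ mul_one _)

lemma hasDerivAt_h1sph_succ (n : ℕ) {t : ℝ} (ht : t ≠ 0) :
    HasDerivAt (h1sph (n + 1)) (h1sph n t - (n + 2) / t * h1sph (n + 1) t) t := by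
  have ht' : (t : ℂ) ≠ 0 := mod_cast ht
  have hn1 : 2 * (n : ℂ) + 1 ≠ 0 := by norm_cast
  have hpow : HasDerivAt (fun s : ℝ ↦ (s : ℂ) ^ (n + 2)) ((n + 2) * t ^ (n + 1)) t := by
    simpa using (hasDerivAt_pow (n + 2) t).ofReal_comp
  have heq : h1sph (n + 1) =ᶠ[𝓝 t]
      fun s ↦ (2 * (n + 1) - 1)‼ * normalizedHankel (n + 1) s / s ^ (n + 2) := by
    filter_upwards [isOpen_ne.mem_nhds ht] with s hs
    rw [h1sph_eq_normalizedHankel (n + 1) hs, div_mul_eq_mul_div]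
  refine ((((hasDerivAt_normalizedHankel_succ n t).const_mul _).div hpow
    (pow_ne_zero _ ht')).congr_of_eventuallyEq heq).congr_deriv ?_
  rw [h1sph_eq_normalizedHankel n ht, h1sph_eq_normalizedHankel (n + 1) ht,
    doubleFactorial_two_mul_succ_sub_one]
  push_cast
  field_simp
  ring

lemma zn1_succ {n : ℕ} {t : ℝ} (ht : t ≠ 0) (hh : h1sph (n + 1) t ≠ 0) :
    zn1 (n + 1) t = t * (h1sph n t / h1sph (n + 1) t) - (n + 2) := by
  have ht' : (t : ℂ) ≠ 0 := mod_cast ht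
  rw [zn1, (hasDerivAt_h1sph_succ n ht).deriv]
  field_simp

lemma zn1_succ_eq_normalizedHankel {n : ℕ} {t : ℝ} (ht : t ≠ 0)
    (hG : normalizedHankel (n + 1) t ≠ 0) :
    zn1 (n + 1) t =
      t ^ 2 / (2 * n + 1) * (normalizedHankel n t / normalizedHankel (n + 1) t) - (n + 2) := by
  have ht' : (t : ℂ) ≠ 0 := mod_cast ht
  have hn1 : 2 * (n : ℂ) + 1 ≠ 0 := by norm_cast
  have hfac : ((2 * n - 1)‼ : ℂ) ≠ 0 := mod_cast (Nat.doubleFactorial_pos _).ne'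
  have hratio : t * (h1sph n t / h1sph (n + 1) t) =
      t ^ 2 / (2 * n + 1) * (normalizedHankel n t / normalizedHankel (n + 1) t) := by
    rw [h1sph_eq_normalizedHankel n ht, h1sph_eq_normalizedHankel (n + 1) ht,
      doubleFactorial_two_mul_succ_sub_one]
    push_cast
    field_simp
    ring
  have hh : h1sph (n + 1) t ≠ 0 := by
    rw [h1sph_eq_normalizedHankel (n + 1) ht]
    exact mul_ne_zero (div_ne_zero (mod_cast (Nat.doubleFactorial_pos _).ne')
      (pow_ne_zero _ ht')) hG
  rw [zn1_succ ht hh, hratio]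

lemma tendsto_mul_zn1_add {t : ℝ} (ht : 0 < t) :
    Tendsto (fun n : ℕ ↦ (n : ℂ) * (zn1 n t + (n + 1))) atTop (𝓝 (t ^ 2 / 2)) := by
  rw [← tendsto_add_atTop_iff_nat 1]
  have hG := tendsto_normalizedHankel ht.le
  have hG' := (tendsto_add_atTop_iff_nat 1).2 hG
  have hcoef := tendsto_add_mul_div_add_mul_atTop_nhds (1 : ℂ) 1 1 two_ne_zero
  have hlim := (hcoef.mul_const ((t : ℂ) ^ 2)).mul
    (hG.div hG' (neg_ne_zero.2 Complex.I_ne_zero))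
  rw [div_self (neg_ne_zero.2 Complex.I_ne_zero), mul_one, one_div_mul_eq_div] at hlim
  refine hlim.congr' ?_
  filter_upwards [(tendsto_add_atTop_nat 1).eventually
    (eventually_normalizedHankel_ne_zero ht.le)] with n hn
  rw [zn1_succ_eq_normalizedHankel ht.ne' hn]
  simp only [Pi.div_apply]
  push_cast
  ring

lemma tendsto_zn1_add {t : ℝ} (ht : 0 < t) :
    Tendsto (fun n : ℕ ↦ zn1 n t + (n + 1)) atTop (𝓝 0) := by
  have hlim := tendsto_inv_atTop_nhds_zero_nat (𝕜 := ℂ) |>.mul (tendsto_mul_zn1_add ht)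
  rw [zero_mul] at hlim
  refine hlim.congr' ?_
  filter_upwards [eventually_ne_atTop 0] with n hn
  exact inv_mul_cancel_left₀ (mod_cast hn) _

lemma tendsto_zn1_mul_one_add_zn1_sub {a b : ℝ} (ha : 0 < a) (hb : 0 < b) :
    Tendsto (fun n : ℕ ↦ zn1 n a * (1 + zn1 n b) - n * (n + 1)) atTop
      (𝓝 (-((a ^ 2 + b ^ 2) / 2 : ℝ))) := by
  have hlim := ((((tendsto_zn1_add ha).mul (tendsto_zn1_add hb)).sub
    (tendsto_mul_zn1_add ha)).sub (tendsto_mul_zn1_add hb)).sub (tendsto_zn1_add hb)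
  have hval : (0 * 0 - a ^ 2 / 2 - b ^ 2 / 2 - 0 : ℂ) = -((a ^ 2 + b ^ 2) / 2 : ℝ) := by
    push_cast
    ring
  rw [hval] at hlim
  exact hlim.congr fun n ↦ by ring

lemma zn1_sub_zn1_isBigO {a b : ℝ} (ha : 0 < a) (hb : 0 < b) :
    (fun n ↦ zn1 n a - zn1 n b) =O[atTop] fun _ ↦ (1 : ℝ) :=
  (((tendsto_zn1_add ha).sub (tendsto_zn1_add hb)).isBigO_one ℝ).congr_left fun n ↦ by ring

lemma zn1_isBigO {t : ℝ} (ht : 0 < t) : (fun n ↦ zn1 n t) =O[atTop] fun n ↦ (n : ℝ) :=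
  ((((tendsto_zn1_add ht).isBigO_one ℝ).trans (const_isBigO_natCast 1)).sub
    natCast_add_one_isBigO).congr_left fun n ↦ by ring

lemma diagonal_bracket_isBigO {a b : ℝ} {x y : ℕ → ℂ} {w : ℕ → ℝ} (ha : 0 < a) (hb : 0 < b)
    (hx : x =O[atTop] w) (hxy : (fun n ↦ x n - y n) =O[atTop] fun n ↦ w n / n) :
    (fun n ↦ zn1 n a * (1 + zn1 n b) * x n - n * (n + 1) * y n) =O[atTop] fun n ↦ n * w n :=
  isBigO_mul_sub_mul ((natCast_isBigO atTop).mul natCast_add_one_isBigO)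
    (((tendsto_zn1_mul_one_add_zn1_sub ha hb).isBigO_one ℝ).trans (const_isBigO_natCast 1)) hx hxy

lemma offDiagonal_bracket_isBigO {A B x y : ℕ → ℂ} {w : ℕ → ℝ}
    (hB : B =O[atTop] fun n ↦ (n : ℝ)) (hAB : (fun n ↦ A n - B n) =O[atTop] fun _ ↦ (1 : ℝ))
    (hx : x =O[atTop] w) (hxy : (fun n ↦ x n - y n) =O[atTop] fun n ↦ w n / n) :
    (fun n : ℕ ↦ (√(n * (n + 1)) : ℂ) * (A n * x n - B n * y n)) =O[atTop] fun n ↦ n * w n := by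
  have hbracket : (fun n ↦ A n * x n - B n * y n) =O[atTop] fun n ↦ 1 * w n :=
    isBigO_mul_sub_mul (by simpa only [one_mul] using hB) hAB hx hxy
  simpa only [one_mul] using sqrt_natCast_mul_add_one_isBigO.mul hbracket

section Entries

variable {R R' κp κs : ℝ}

lemma znp_sub_pow_isBigO (hR : 0 < R) (hR' : 0 < R') (hκp : 0 < κp) :
    (fun n ↦ znp R' R κp n - ((R' / R : ℝ) : ℂ) ^ (n + 1))
      =O[atTop] fun n : ℕ ↦ (R' / R) ^ n / n := by
  have h := h1sph_div_h1sph_sub_pow_isBigO (mul_pos hκp hR) (mul_pos hκp hR')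
  rwa [mul_div_mul_left _ _ hκp.ne'] at h

lemma znp_isBigO (hR : 0 < R) (hR' : 0 < R') (hκp : 0 < κp) :
    znp R' R κp =O[atTop] fun n ↦ (R' / R) ^ n := by
  have h := h1sph_div_h1sph_isBigO (mul_pos hκp hR) (mul_pos hκp hR')
  rwa [mul_div_mul_left _ _ hκp.ne'] at h

lemma zns_isBigO (hR : 0 < R) (hR' : 0 < R') (hκs : 0 < κs) :
    zns R' R κs =O[atTop] fun n ↦ (R' / R) ^ n :=
  znp_isBigO hR hR' hκs

lemma znp_sub_zns_isBigO (hR : 0 < R) (hR' : 0 < R') (hκp : 0 < κp) (hκs : 0 < κs) :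
    (fun n ↦ znp R' R κp n - zns R' R κs n) =O[atTop] fun n ↦ (R' / R) ^ n / n :=
  ((znp_sub_pow_isBigO hR hR' hκp).sub (znp_sub_pow_isBigO hR hR' hκs)).congr_left
    fun _ ↦ sub_sub_sub_cancel_right _ _ _

lemma tendsto_LambdaN (hR' : 0 < R') (hκp : 0 < κp) (hκs : 0 < κs) :
    Tendsto (LambdaN R' κp κs) atTop (𝓝 (-(((κp * R') ^ 2 + (κs * R') ^ 2) / 2 : ℝ))) :=
  tendsto_zn1_mul_one_add_zn1_sub (mul_pos hκp hR') (mul_pos hκs hR')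

lemma div_mul_LambdaN_isBigO (R : ℝ) (hR' : 0 < R') (hκp : 0 < κp) (hκs : 0 < κs) :
    (fun n ↦ (R' : ℂ) / (R * LambdaN R' κp κs n)) =O[atTop] fun _ ↦ (1 : ℝ) := by
  have hlim_ne : (-(((κp * R') ^ 2 + (κs * R') ^ 2) / 2 : ℝ) : ℂ) ≠ 0 :=
    neg_ne_zero.2 (mod_cast (by positivity : 0 < ((κp * R') ^ 2 + (κs * R') ^ 2) / 2).ne')
  have hinv := ((tendsto_LambdaN hR' hκp hκs).inv₀ hlim_ne).isBigO_one ℝ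
  exact (hinv.const_mul_left (R' / R : ℂ)).congr_left fun n ↦ by ring

lemma Qn11_isBigO (hR : 0 < R) (hR' : 0 < R') (hκp : 0 < κp) (hκs : 0 < κs) :
    Qn11 R' R κp κs =O[atTop] fun n ↦ n * (R' / R) ^ n := by
  have hbracket := diagonal_bracket_isBigO (mul_pos hκp hR') (mul_pos hκs hR)
    (zns_isBigO hR hR' hκs) (znp_sub_zns_isBigO hR hR' hκp hκs).symm
  exact ((div_mul_LambdaN_isBigO R hR' hκp hκs).mul hbracket).congr
    (fun n ↦ by rw [Qn11]; ring) (fun n ↦ one_mul _)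

lemma Qn13_isBigO (hR : 0 < R) (hR' : 0 < R') (hκp : 0 < κp) (hκs : 0 < κs) :
    Qn13 R' R κp κs =O[atTop] fun n ↦ n * (R' / R) ^ n := by
  have hB : (fun n ↦ 1 + zn1 n (κs * R)) =O[atTop] fun n ↦ (n : ℝ) :=
    (const_isBigO_natCast 1).add (zn1_isBigO (mul_pos hκs hR))
  have hAB : (fun n ↦ 1 + zn1 n (κs * R') - (1 + zn1 n (κs * R))) =O[atTop] fun _ ↦ (1 : ℝ) := by
    simpa only [add_sub_add_left_eq_sub] using
      zn1_sub_zn1_isBigO (mul_pos hκs hR') (mul_pos hκs hR)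
  have hbracket := offDiagonal_bracket_isBigO hB hAB
    (znp_isBigO hR hR' hκp) (znp_sub_zns_isBigO hR hR' hκp hκs)
  exact ((div_mul_LambdaN_isBigO R hR' hκp hκs).mul hbracket).congr
    (fun n ↦ by rw [Qn13]; ring) (fun n ↦ one_mul _)

lemma Qn31_isBigO (hR : 0 < R) (hR' : 0 < R') (hκp : 0 < κp) (hκs : 0 < κs) :
    Qn31 R' R κp κs =O[atTop] fun n ↦ n * (R' / R) ^ n := by
  have hbracket := offDiagonal_bracket_isBigO (zn1_isBigO (mul_pos hκp hR))
    (zn1_sub_zn1_isBigO (mul_pos hκp hR') (mul_pos hκp hR))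
    (zns_isBigO hR hR' hκs) (znp_sub_zns_isBigO hR hR' hκp hκs).symm
  exact ((div_mul_LambdaN_isBigO R hR' hκp hκs).mul hbracket).congr
    (fun n ↦ by rw [Qn31]; ring) (fun n ↦ one_mul _)

lemma Qn33_isBigO (hR : 0 < R) (hR' : 0 < R') (hκp : 0 < κp) (hκs : 0 < κs) :
    Qn33 R' R κp κs =O[atTop] fun n ↦ n * (R' / R) ^ n := by
  have hbracket := diagonal_bracket_isBigO (mul_pos hκp hR) (mul_pos hκs hR')
    (znp_isBigO hR hR' hκp) (znp_sub_zns_isBigO hR hR' hκp hκs)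
  exact ((div_mul_LambdaN_isBigO R hR' hκp hκs).mul hbracket).congr
    (fun n ↦ by rw [Qn33]; ring) (fun n ↦ one_mul _)

lemma Qn22_isBigO (hR : 0 < R) (hR' : 0 < R') (hκs : 0 < κs) :
    Qn22 R' R κs =O[atTop] fun n ↦ n * (R' / R) ^ n :=
  ((const_isBigO_natCast (1 : ℂ)).mul (zns_isBigO hR hR' hκs)).congr_left fun _ ↦ one_mul _

end Entries

theorem Qn_entries_bound_general (R R' κp κs : ℝ)
    (hR : 0 < R) (hR' : 0 < R') (hκp : 0 < κp) (hκs : 0 < κs) :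
    ∃ C : ℝ, 0 < C ∧ ∃ N : ℕ, ∀ n : ℕ, N ≤ n →
      ‖Qn11 R' R κp κs n‖ ≤ C * n * (R' / R) ^ n ∧
      ‖Qn13 R' R κp κs n‖ ≤ C * n * (R' / R) ^ n ∧
      ‖Qn31 R' R κp κs n‖ ≤ C * n * (R' / R) ^ n ∧
      ‖Qn33 R' R κp κs n‖ ≤ C * n * (R' / R) ^ n ∧
      ‖Qn22 R' R κs n‖ ≤ C * n * (R' / R) ^ n := by
  have hentries := (Qn11_isBigO hR hR' hκp hκs).prod_left <|
    (Qn13_isBigO hR hR' hκp hκs).prod_left <| (Qn31_isBigO hR hR' hκp hκs).prod_left <|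
    (Qn33_isBigO hR hR' hκp hκs).prod_left <| Qn22_isBigO hR hR' hκs
  obtain ⟨C, hC, hbound⟩ := hentries.exists_pos
  obtain ⟨N, hN⟩ := eventually_atTop.1 hbound.bound
  refine ⟨C, hC, N, fun n hn ↦ ?_⟩
  have hgauge : C * ‖n * (R' / R) ^ n‖ = C * n * (R' / R) ^ n := by
    rw [Real.norm_of_nonneg (by positivity), mul_assoc]
  simpa only [hgauge, norm_prod_le_iff] using hN n hn

/-- All the nonzero entries of the matrix `Q_n` satisfy `|Q_{n,ij}| ≤ C n (R'/R)^n`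
for sufficiently large `n`. -/
theorem Qn_entries_bound (R R' κp κs : ℝ)
    (hR' : 0 < R') (hRR : R' < R) (hκp : 0 < κp) (hκ : κp < κs) :
    ∃ C : ℝ, 0 < C ∧ ∃ N : ℕ, ∀ n : ℕ, N ≤ n →
      ‖Qn11 R' R κp κs n‖ ≤ C * n * (R' / R) ^ n ∧
      ‖Qn13 R' R κp κs n‖ ≤ C * n * (R' / R) ^ n ∧
      ‖Qn31 R' R κp κs n‖ ≤ C * n * (R' / R) ^ n ∧
      ‖Qn33 R' R κp κs n‖ ≤ C * n * (R' / R) ^ n ∧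
      ‖Qn22 R' R κs n‖ ≤ C * n * (R' / R) ^ n :=
  Qn_entries_bound_general R R' κp κs (hR'.trans hRR) hR' hκp (hκp.trans hκ)
end

section
/- For every n ∈ ℕ and all t_p, t_s > 0, defining z_n^{(1)}(t) = t·(h^{(1)}_n)'(t)/h^{(1)}_n(t), the imaginary part of Λ_n = z_n^{(1)}(t_p)·(1 + z_n^{(1)}(t_s)) − n(n+1) satisfies Im Λ_n = Re z_n^{(1)}(t_p)·Im z_n^{(1)}(t_s) + (1 + Re z_n^{(1)}(t_s))·Im z_n^{(1)}(t_p) < 0. -/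
/-!
The Riccati–Hankel function `ξ_n(t) = t h^{(1)}_n(t)` satisfies `1 + z_n^{(1)} = t ξ_n' / ξ_n`.
Hence `Im z_n^{(1)} = t / |ξ_n|²` by the constancy of the Wronskian, and
`1 + Re z_n^{(1)} = t (|ξ_n|²)' / (2 |ξ_n|²)`. The latter is nonpositive because `M_n = |ξ_n|²` is
a polynomial in `1 / t` with nonnegative coefficients: writing `C_n = ⟪ξ_n, ξ_{n+1}⟫`, the ladder
relations give `C_n = (n + 1) M_n / t - M_n' / 2` and `M_{n+1} = M_n - C_n'`, and `-d/dt` preserves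
such polynomials. So `Re z_n^{(1)} ≤ -1` and `Im z_n^{(1)} > 0`, which makes the two summands of
`Im Λ_n` negative and nonpositive.
-/

open Complex Polynomial
open scoped ComplexConjugate NNReal RealInnerProductSpace

theorem hasDerivAt_aeval_inv {𝕜 R : Type*} [NontriviallyNormedField 𝕜] [CommSemiring R]
    [Algebra R 𝕜] (P : R[X]) {x : 𝕜} (hx : x ≠ 0) :
    HasDerivAt (fun y => aeval y⁻¹ P) (-aeval x⁻¹ (X ^ 2 * derivative P)) x := by
  refine ((P.hasDerivAt_aeval x⁻¹).comp x (hasDerivAt_inv hx)).congr_deriv ?_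
  simp only [map_mul, map_pow, aeval_X, inv_pow]
  ring

theorem aeval_nonneg_of_nnreal (P : ℝ≥0[X]) {x : ℝ} (hx : 0 ≤ x) : 0 ≤ aeval x P := by
  lift x to ℝ≥0 using hx
  exact (aeval_algebraMap_apply_eq_algebraMap_eval (A := ℝ) x P).symm ▸ (eval x P).coe_nonneg

/-- The Riccati–Hankel function `ξ_n(t) = t h^{(1)}_n(t)`, whose logarithmic derivative is
`(1 + z_n^{(1)}(t)) / t`. -/
noncomputable def riccatiHankel (n : ℕ) (t : ℝ) : ℂ := t * h1sph n t

theorem riccatiHankel_add_two (n : ℕ) (t : ℝ) :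
    riccatiHankel (n + 2) t =
      ((2 * n + 3) / t : ℝ) • riccatiHankel (n + 1) t - riccatiHankel n t := by
  simp only [riccatiHankel, h1sph, jsph, ysph, real_smul]
  push_cast
  ring

section RiccatiHankel

variable {t : ℝ}

theorem riccatiHankel_zero (ht : t ≠ 0) : riccatiHankel 0 t = -I * exp (t * I) := by
  have ht' : (t : ℂ) ≠ 0 := ofReal_ne_zero.mpr ht
  simp only [riccatiHankel, h1sph, jsph, ysph, exp_mul_I]
  push_cast
  field_simp
  linear_combination sin t * I_sq

theorem riccatiHankel_one (ht : t ≠ 0) :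
    riccatiHankel 1 t = (t⁻¹ : ℝ) • riccatiHankel 0 t - I * riccatiHankel 0 t := by
  have ht' : (t : ℂ) ≠ 0 := ofReal_ne_zero.mpr ht
  simp only [riccatiHankel, h1sph, jsph, ysph, real_smul]
  push_cast
  field_simp
  linear_combination (-t * cos t) * I_sq

theorem hasDerivAt_riccatiHankel_zero (ht : t ≠ 0) :
    HasDerivAt (riccatiHankel 0) (I * riccatiHankel 0 t) t := by
  have hexp : HasDerivAt (fun s : ℝ => -I * exp (s * I)) (I * (-I * exp (t * I))) t :=
    (((hasDerivAt_id t).ofReal_comp.mul_const I).cexp.const_mul (-I)).congr_deriv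
      (by simp only [id, ofReal_one, one_mul]; ring)
  rw [riccatiHankel_zero ht]
  exact hexp.congr_of_eventuallyEq ((eventually_ne_nhds ht).mono fun s => riccatiHankel_zero)

theorem hasDerivAt_riccatiHankel_one (ht : t ≠ 0) :
    HasDerivAt (riccatiHankel 1) (riccatiHankel 0 t - t⁻¹ • riccatiHankel 1 t) t := by
  have h0 := hasDerivAt_riccatiHankel_zero ht
  refine ((((hasDerivAt_inv ht).smul h0).sub (h0.const_mul I)).congr_of_eventuallyEq
    ((eventually_ne_nhds ht).mono fun s => riccatiHankel_one)).congr_deriv ?_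
  rw [riccatiHankel_one ht]
  simp only [real_smul]
  push_cast
  linear_combination (-riccatiHankel 0 t) * I_sq

theorem hasDerivAt_riccatiHankel_and_succ (n : ℕ) (ht : t ≠ 0) :
    HasDerivAt (riccatiHankel n)
        (((n + 1) / t : ℝ) • riccatiHankel n t - riccatiHankel (n + 1) t) t ∧
      HasDerivAt (riccatiHankel (n + 1))
        (riccatiHankel n t - ((n + 1) / t : ℝ) • riccatiHankel (n + 1) t) t := by
  induction n with
  | zero =>
    exact ⟨(hasDerivAt_riccatiHankel_zero ht).congr_deriv (by simp [riccatiHankel_one ht]),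
      (hasDerivAt_riccatiHankel_one ht).congr_deriv (by simp)⟩
  | succ n ih =>
    obtain ⟨hn, hn1⟩ := ih
    have ht' : (t : ℂ) ≠ 0 := ofReal_ne_zero.mpr ht
    have hcoeff : HasDerivAt (fun s : ℝ => (2 * n + 3) / s) (-(2 * n + 3) / t ^ 2) t :=
      ((hasDerivAt_inv ht).const_mul (2 * n + 3 : ℝ)).congr_deriv (by ring)
    constructor
    · refine hn1.congr_deriv ?_
      rw [riccatiHankel_add_two]
      simp only [real_smul]
      push_cast
      field_simp
      ring
    · refine (((hcoeff.smul hn1).sub hn).congr_of_eventuallyEq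
        (.of_forall fun s => riccatiHankel_add_two n s)).congr_deriv ?_
      rw [riccatiHankel_add_two]
      simp only [real_smul]
      push_cast
      field_simp
      ring

theorem hasDerivAt_riccatiHankel (n : ℕ) (ht : t ≠ 0) :
    HasDerivAt (riccatiHankel n)
      (((n + 1) / t : ℝ) • riccatiHankel n t - riccatiHankel (n + 1) t) t :=
  (hasDerivAt_riccatiHankel_and_succ n ht).1

theorem hasDerivAt_riccatiHankel_succ (n : ℕ) (ht : t ≠ 0) :
    HasDerivAt (riccatiHankel (n + 1))
      (riccatiHankel n t - ((n + 1) / t : ℝ) • riccatiHankel (n + 1) t) t :=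
  (hasDerivAt_riccatiHankel_and_succ n ht).2

theorem im_riccatiHankel_succ_mul_conj (n : ℕ) (ht : t ≠ 0) :
    (riccatiHankel (n + 1) t * conj (riccatiHankel n t)).im = -1 := by
  induction n with
  | zero =>
    have hnorm : ‖riccatiHankel 0 t‖ = 1 := by simp [riccatiHankel_zero ht, norm_exp_ofReal_mul_I]
    have hsq : riccatiHankel 0 t * conj (riccatiHankel 0 t) = 1 := by simp [mul_conj', hnorm]
    have hmul : riccatiHankel 1 t * conj (riccatiHankel 0 t) = (t⁻¹ : ℝ) - I := by
      rw [riccatiHankel_one ht, real_smul]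
      linear_combination ((t⁻¹ : ℝ) - I) * hsq
    rw [zero_add, hmul, sub_im, ofReal_im, I_im, zero_sub]
  | succ n ih =>
    rw [← ih, riccatiHankel_add_two]
    simp only [mul_im, sub_im, sub_re, conj_re, conj_im, smul_re, smul_im, smul_eq_mul]
    ring

theorem riccatiHankel_ne_zero (n : ℕ) (ht : t ≠ 0) : riccatiHankel n t ≠ 0 := by
  intro h
  simpa [h] using im_riccatiHankel_succ_mul_conj n ht

theorem im_deriv_riccatiHankel_mul_conj (n : ℕ) (ht : t ≠ 0) :
    (deriv (riccatiHankel n) t * conj (riccatiHankel n t)).im = 1 := by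
  have hW := im_riccatiHankel_succ_mul_conj n ht
  rw [(hasDerivAt_riccatiHankel n ht).deriv]
  simp only [mul_im, sub_im, sub_re, conj_re, conj_im, smul_re, smul_im, smul_eq_mul] at hW ⊢
  linear_combination -hW

theorem hasDerivAt_norm_sq_riccatiHankel (n : ℕ) (ht : t ≠ 0) :
    HasDerivAt (fun s => ‖riccatiHankel n s‖ ^ 2)
      (2 * ((n + 1) / t * ‖riccatiHankel n t‖ ^ 2
        - ⟪riccatiHankel n t, riccatiHankel (n + 1) t⟫)) t := by
  refine (hasDerivAt_riccatiHankel n ht).norm_sq.congr_deriv ?_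
  rw [inner_sub_right, real_inner_smul_right, real_inner_self_eq_norm_sq]

theorem hasDerivAt_inner_riccatiHankel_succ (n : ℕ) (ht : t ≠ 0) :
    HasDerivAt (fun s => ⟪riccatiHankel n s, riccatiHankel (n + 1) s⟫)
      (‖riccatiHankel n t‖ ^ 2 - ‖riccatiHankel (n + 1) t‖ ^ 2) t := by
  refine ((hasDerivAt_riccatiHankel n ht).inner ℝ
    (hasDerivAt_riccatiHankel_succ n ht)).congr_deriv ?_
  rw [inner_sub_right, inner_sub_left, real_inner_smul_right, real_inner_smul_left,
    real_inner_self_eq_norm_sq, real_inner_self_eq_norm_sq]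
  ring

theorem inner_riccatiHankel_succ_eq_aeval_inv {n : ℕ} {P : ℝ≥0[X]}
    (hP : ∀ t : ℝ, t ≠ 0 → ‖riccatiHankel n t‖ ^ 2 = aeval t⁻¹ P) (ht : t ≠ 0) :
    ⟪riccatiHankel n t, riccatiHankel (n + 1) t⟫ =
      aeval t⁻¹ (C (n + 1 : ℝ≥0) * X * P + C (2⁻¹ : ℝ≥0) * X ^ 2 * derivative P) := by
  have deriv_eq := (hasDerivAt_norm_sq_riccatiHankel n ht).unique
    ((hasDerivAt_aeval_inv P ht).congr_of_eventuallyEq ((eventually_ne_nhds ht).mono hP))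
  rw [hP t ht] at deriv_eq
  simp only [map_add, map_mul, map_pow, aeval_X, aeval_C, NNReal.algebraMap_eq_coe] at deriv_eq ⊢
  push_cast
  linear_combination (-1 / 2) * deriv_eq

theorem exists_norm_sq_riccatiHankel_eq_aeval_inv (n : ℕ) :
    ∃ P : ℝ≥0[X], ∀ t : ℝ, t ≠ 0 → ‖riccatiHankel n t‖ ^ 2 = aeval t⁻¹ P := by
  induction n with
  | zero =>
    exact ⟨1, fun t ht => by simp [riccatiHankel_zero ht, norm_exp_ofReal_mul_I]⟩
  | succ n ih =>
    obtain ⟨P, hP⟩ := ih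
    let Q : ℝ≥0[X] := C (n + 1 : ℝ≥0) * X * P + C (2⁻¹ : ℝ≥0) * X ^ 2 * derivative P
    refine ⟨P + X ^ 2 * derivative Q, fun t ht => ?_⟩
    have deriv_eq := (hasDerivAt_inner_riccatiHankel_succ n ht).unique
      ((hasDerivAt_aeval_inv Q ht).congr_of_eventuallyEq ((eventually_ne_nhds ht).mono
        fun s => inner_riccatiHankel_succ_eq_aeval_inv hP))
    rw [map_add, ← hP t ht]
    linear_combination -deriv_eq

theorem inner_riccatiHankel_deriv_nonpos (n : ℕ) (ht : 0 < t) :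
    ⟪riccatiHankel n t, deriv (riccatiHankel n) t⟫ ≤ 0 := by
  obtain ⟨P, hP⟩ := exists_norm_sq_riccatiHankel_eq_aeval_inv n
  have deriv_eq := (hasDerivAt_riccatiHankel n ht.ne').differentiableAt.hasDerivAt.norm_sq.unique
    ((hasDerivAt_aeval_inv P ht.ne').congr_of_eventuallyEq ((eventually_ne_nhds ht.ne').mono hP))
  linarith [aeval_nonneg_of_nnreal (X ^ 2 * derivative P) (inv_nonneg.mpr ht.le)]

theorem zn1_eq_deriv_riccatiHankel_div (n : ℕ) (ht : t ≠ 0) :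
    zn1 n t = t * deriv (riccatiHankel n) t / riccatiHankel n t - 1 := by
  have ht' : (t : ℂ) ≠ 0 := ofReal_ne_zero.mpr ht
  have hne := riccatiHankel_ne_zero n ht
  have h1sph_eq : ∀ s : ℝ, s ≠ 0 → h1sph n s = s⁻¹ • riccatiHankel n s := fun s hs => by
    rw [riccatiHankel, ← real_smul, inv_smul_smul₀ hs]
  have hderiv := ((hasDerivAt_inv ht).smul
    (hasDerivAt_riccatiHankel n ht).differentiableAt.hasDerivAt).congr_of_eventuallyEq
    ((eventually_ne_nhds ht).mono h1sph_eq)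
  rw [zn1, hderiv.deriv, h1sph_eq t ht]
  simp only [real_smul]
  push_cast
  field_simp
  ring

theorem zn1_eq_deriv_riccatiHankel_mul_conj (n : ℕ) (ht : t ≠ 0) :
    zn1 n t = (t / ‖riccatiHankel n t‖ ^ 2 : ℝ) *
      (deriv (riccatiHankel n) t * conj (riccatiHankel n t)) - 1 := by
  rw [zn1_eq_deriv_riccatiHankel_div n ht, mul_div_assoc, div_eq_mul_inv (deriv _ _), inv_def,
    normSq_eq_norm_sq]
  push_cast
  ring

theorem re_zn1_le_neg_one (n : ℕ) (ht : 0 < t) : (zn1 n t).re ≤ -1 := by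
  have hinner := inner_riccatiHankel_deriv_nonpos n ht
  rw [Complex.inner] at hinner
  rw [zn1_eq_deriv_riccatiHankel_mul_conj n ht.ne', sub_re, re_ofReal_mul, one_re]
  linarith [mul_nonpos_of_nonneg_of_nonpos
    (div_nonneg ht.le (sq_nonneg ‖riccatiHankel n t‖)) hinner]

theorem im_zn1_pos (n : ℕ) (ht : 0 < t) : 0 < (zn1 n t).im := by
  have hnorm := norm_pos_iff.mpr (riccatiHankel_ne_zero n ht.ne')
  rw [zn1_eq_deriv_riccatiHankel_mul_conj n ht.ne', sub_im, im_ofReal_mul,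
    im_deriv_riccatiHankel_mul_conj n ht.ne', one_im]
  simpa using div_pos ht (pow_pos hnorm 2)

end RiccatiHankel

/-- The imaginary part of `Λ_n = z_n^{(1)}(t_p)(1 + z_n^{(1)}(t_s)) - n(n+1)` equals
`Re z_n^{(1)}(t_p) Im z_n^{(1)}(t_s) + (1 + Re z_n^{(1)}(t_s)) Im z_n^{(1)}(t_p)`
and is negative. -/
theorem im_Lambda_n_neg (n : ℕ) (tp ts : ℝ) (htp : 0 < tp) (hts : 0 < ts) :
    (zn1 n tp * (1 + zn1 n ts) - (n : ℂ) * ((n : ℂ) + 1)).im =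
      (zn1 n tp).re * (zn1 n ts).im + (1 + (zn1 n ts).re) * (zn1 n tp).im ∧
    (zn1 n tp * (1 + zn1 n ts) - (n : ℂ) * ((n : ℂ) + 1)).im < 0 := by
  have im_eq : (zn1 n tp * (1 + zn1 n ts) - (n : ℂ) * ((n : ℂ) + 1)).im =
      (zn1 n tp).re * (zn1 n ts).im + (1 + (zn1 n ts).re) * (zn1 n tp).im := by
    simp only [sub_im, mul_im, add_im, add_re, one_im, one_re, natCast_im, natCast_re]
    ring
  refine ⟨im_eq, im_eq ▸ add_neg_of_neg_of_nonpos ?_ ?_⟩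
  · exact mul_neg_of_neg_of_pos (by linarith [re_zn1_le_neg_one n htp]) (im_zn1_pos n hts)
  · exact mul_nonpos_of_nonpos_of_nonneg (by linarith [re_zn1_le_neg_one n hts])
      (im_zn1_pos n htp).le
end
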